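/- arXiv:0705.1833 — 2 statements merged into one kernel-verified Lean document; each statement's English description precedes it below -/
import Mathlib

section
/- Holomorphy in the chart r2: fix t, s ∈ ℂ with t, s ∉ {0,1} and t ≠ s; then there exists a polynomial P in four variables with complex coefficients such that for all complex (q1,p1,q2,p2) with q1 ≠ 0, q2 ∉ {0,1,t,s} and q2 + 1/q1 ∉ {0,1,t,s}, one has H1(ψ(q1,p1,q2,p2), t, s) = P((q1q2+1)q2, p1/q2², 1/q2, −(q2·p2 − 2(q1q2 + 1/2)·p1/q2)·q2). That is, the polynomial Hamiltonian obtained from H1 by φ1 becomes again polynomial in the coordinates (x2,y2,z2,w2) = ((q1q2+1)q2, p1/q2², 1/q2, −(q2p2 − 2(q1q2+1/2)p1/q2)q2). -/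
/-- The quadratic form `B(q,p)` appearing in the Garnier Hamiltonian, with
`κ = ((κ0+κ1+θ1+θ2-1)² - κ∞²)/4`. -/
noncomputable def garnierB (κ0 κ1 κinf θ1 θ2 t s q p : ℂ) : ℂ :=
  p ^ 2 + (((κ0 + κ1 + θ1 + θ2 - 1) ^ 2 - κinf ^ 2) / 4) / (q * (q - 1)) -
    ((θ1 - 1) / (q - t) + θ2 / (q - s) + κ0 / q + κ1 / (q - 1)) * p

/-- The Hamiltonian `H1` of the Garnier system in two variables. -/
noncomputable def garnierH1 (κ0 κ1 κinf θ1 θ2 q1 p1 q2 p2 t s : ℂ) : ℂ :=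
  -(q1 * (q1 - 1) * (q1 - t) * (q1 - s) * (q2 - t)) /
      ((q1 - q2) * t * (t - 1) * (t - s)) *
      garnierB κ0 κ1 κinf θ1 θ2 t s q1 p1 -
    (q2 * (q2 - 1) * (q2 - t) * (q2 - s) * (q1 - t)) /
      ((q2 - q1) * t * (t - 1) * (t - s)) *
      garnierB κ0 κ1 κinf θ1 θ2 t s q2 p2

/-- The inverse ψ of the symplectic transformation φ1, written componentwise:
`ψ(Q1,P1,Q2,P2) = (Q2 + 1/Q1, Q1(c - P1·Q1), Q2, P2 - Q1(c - P1·Q1))`. -/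
noncomputable def psi (c : ℂ) : ℂ × ℂ × ℂ × ℂ → ℂ × ℂ × ℂ × ℂ :=
  fun (Q1, P1, Q2, P2) =>
    (Q2 + 1 / Q1, Q1 * (c - P1 * Q1), Q2, P2 - Q1 * (c - P1 * Q1))

/-- `H1` evaluated on a tuple of canonical variables. -/
noncomputable def garnierH1' (κ0 κ1 κinf θ1 θ2 : ℂ) (v : ℂ × ℂ × ℂ × ℂ)
    (t s : ℂ) : ℂ :=
  garnierH1 κ0 κ1 κinf θ1 θ2 v.1 v.2.1 v.2.2.1 v.2.2.2 t s

/-- The quartic multiple of `B` without denominators. -/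
theorem garnierB_mul (κ0 κ1 κinf θ1 θ2 t s q p : ℂ) (h0 : q ≠ 0) (h1 : q - 1 ≠ 0)
    (h2 : q - t ≠ 0) (h3 : q - s ≠ 0) :
    q * (q - 1) * (q - t) * (q - s) * garnierB κ0 κ1 κinf θ1 θ2 t s q p =
      q * (q - 1) * (q - t) * (q - s) * p ^ 2 +
      (((κ0 + κ1 + θ1 + θ2 - 1) ^ 2 - κinf ^ 2) / 4) * ((q - t) * (q - s)) -
      ((θ1 - 1) * (q * (q - 1) * (q - s)) + θ2 * (q * (q - 1) * (q - t)) +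
        κ0 * ((q - 1) * (q - t) * (q - s)) + κ1 * (q * (q - t) * (q - s))) * p := by
  unfold garnierB
  field_simp

/-- The first polynomial factor, for any commutative ring. -/
def garG1 {R : Type*} [CommRing R] (κ0 κ1 θ1 θ2 t s c k x y z : R) : R :=
  let u := x * z - 1
  let n := c - x * y
  let a := c * z - y * u
  let E3 := -(1 + t + s) * x ^ 2 + (t + s + t * s) * x * u - t * s * u ^ 2
  let Ets := -(t + s) * x + t * s * u
  let E1s := -(1 + s) * x + s * u
  let E1t := -(1 + t) * x + t * u
  x ^ 2 * (2 * c * n + u * n ^ 2) + x * E3 * a ^ 2 + k * Ets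
    - x ^ 2 * n * (κ0 + κ1 + θ1 + θ2 - 1)
    - a * ((θ1 - 1) * x * E1s + θ2 * x * E1t + κ0 * E3 + κ1 * x * Ets)

/-- The second polynomial factor, for any commutative ring. -/
def garG2 {R : Type*} [CommRing R] (κ0 κ1 θ1 θ2 t s c k x y z w : R) : R :=
  let m := x ^ 2 * y - w - c * x
  let r := c + z * m
  let e3 := -(1 + t + s) + (t + s + t * s) * z - t * s * z ^ 2
  let ets := -(t + s) + t * s * z
  let e1s := -(1 + s) + s * z
  let e1t := -(1 + t) + t * z
  e3 * r ^ 2 + (2 * c * m + z * m ^ 2) + k * ets - m * (κ0 + κ1 + θ1 + θ2 - 1)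
    - r * ((θ1 - 1) * e1s + θ2 * e1t + κ0 * e3 + κ1 * ets)

theorem garG1_spec (κ0 κ1 θ1 θ2 t s c k u y z : ℂ) (hz : z ≠ 0) (hu : u ≠ 0)
    (hk : k = (κ0 + κ1 + θ1 + θ2 - 1) * c - c ^ 2) (Q p : ℂ)
    (hQ : Q = (1 + u) / (z * u)) (hp : p = u * (c * z - y * u)) :
    Q * (Q - 1) * (Q - t) * (Q - s) * p ^ 2 + k * ((Q - t) * (Q - s)) -
      ((θ1 - 1) * (Q * (Q - 1) * (Q - s)) + θ2 * (Q * (Q - 1) * (Q - t)) +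
        κ0 * ((Q - 1) * (Q - t) * (Q - s)) + κ1 * (Q * (Q - t) * (Q - s))) * p =
    garG1 κ0 κ1 θ1 θ2 t s c k ((1 + u) / z) y z / u := by
  have hxz : (1 + u) / z * z - 1 = u := by field_simp; ring
  simp only [garG1, hxz]
  subst hQ hp hk
  field_simp
  ring

theorem garG2_spec (κ0 κ1 θ1 θ2 t s c k x y z w : ℂ) (hz : z ≠ 0)
    (hk : k = (κ0 + κ1 + θ1 + θ2 - 1) * c - c ^ 2) (Q p : ℂ)
    (hQ : Q = 1 / z) (hp : p = z * (c + z * (x ^ 2 * y - w - c * x))) :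
    Q * (Q - 1) * (Q - t) * (Q - s) * p ^ 2 + k * ((Q - t) * (Q - s)) -
      ((θ1 - 1) * (Q * (Q - 1) * (Q - s)) + θ2 * (Q * (Q - 1) * (Q - t)) +
        κ0 * ((Q - 1) * (Q - t) * (Q - s)) + κ1 * (Q * (Q - t) * (Q - s))) * p =
    garG2 κ0 κ1 θ1 θ2 t s c k x y z w / z := by
  simp only [garG2]
  generalize x ^ 2 * y - w - c * x = m at *
  subst hQ hp hk
  field_simp
  ring

/-- Holomorphy in the chart `r2`: the polynomial Hamiltonian obtained from `H1`
by φ1 becomes again polynomial in the coordinates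
`(x2,y2,z2,w2) = ((q1q2+1)q2, p1/q2², 1/q2, -(q2·p2 - 2(q1q2+1/2)·p1/q2)·q2)`. -/
theorem garnierH1_chart_r2 (κ0 κ1 κinf θ1 θ2 t s : ℂ)
    (ht0 : t ≠ 0) (ht1 : t ≠ 1) (hs0 : s ≠ 0) (hs1 : s ≠ 1) (hts : t ≠ s) :
    ∃ P : MvPolynomial (Fin 4) ℂ, ∀ q1 p1 q2 p2 : ℂ,
      q1 ≠ 0 → q2 ≠ 0 → q2 ≠ 1 → q2 ≠ t → q2 ≠ s →
      q2 + 1 / q1 ≠ 0 → q2 + 1 / q1 ≠ 1 → q2 + 1 / q1 ≠ t → q2 + 1 / q1 ≠ s →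
      garnierH1' κ0 κ1 κinf θ1 θ2
          (psi ((κ0 + κ1 - κinf + θ1 + θ2 - 1) / 2) (q1, p1, q2, p2)) t s =
        MvPolynomial.eval
          ![(q1 * q2 + 1) * q2, p1 / q2 ^ 2, 1 / q2,
            -(q2 * p2 - 2 * (q1 * q2 + 1 / 2) * p1 / q2) * q2] P := by
  obtain ⟨c, hc⟩ : ∃ c, c = (κ0 + κ1 - κinf + θ1 + θ2 - 1) / 2 := ⟨_, rfl⟩
  obtain ⟨k, hk'⟩ : ∃ k, k = ((κ0 + κ1 + θ1 + θ2 - 1) ^ 2 - κinf ^ 2) / 4 := ⟨_, rfl⟩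
  have hk : k = (κ0 + κ1 + θ1 + θ2 - 1) * c - c ^ 2 := by rw [hk', hc]; ring
  rw [← hc]
  have ht1' : t - 1 ≠ 0 := sub_ne_zero.mpr ht1
  have hts' : t - s ≠ 0 := sub_ne_zero.mpr hts
  refine ⟨MvPolynomial.C (1 / (t * (t - 1) * (t - s))) *
    (-(1 - MvPolynomial.C t * MvPolynomial.X 2) *
      garG1 (MvPolynomial.C κ0) (MvPolynomial.C κ1) (MvPolynomial.C θ1) (MvPolynomial.C θ2)
        (MvPolynomial.C t) (MvPolynomial.C s) (MvPolynomial.C c) (MvPolynomial.C k)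
        (MvPolynomial.X 0) (MvPolynomial.X 1) (MvPolynomial.X 2) +
    (MvPolynomial.X 0 - MvPolynomial.C t *
        (MvPolynomial.X 0 * MvPolynomial.X 2 - 1)) *
      garG2 (MvPolynomial.C κ0) (MvPolynomial.C κ1) (MvPolynomial.C θ1) (MvPolynomial.C θ2)
        (MvPolynomial.C t) (MvPolynomial.C s) (MvPolynomial.C c) (MvPolynomial.C k)
        (MvPolynomial.X 0) (MvPolynomial.X 1) (MvPolynomial.X 2) (MvPolynomial.X 3)), ?_⟩
  intro q1 p1 q2 p2 h1 h2 h3 h4 h5 h6 h7 h8 h9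
  have hev : ∀ x y z w : ℂ, MvPolynomial.eval ![x, y, z, w]
      (MvPolynomial.C (1 / (t * (t - 1) * (t - s))) *
    (-(1 - MvPolynomial.C t * MvPolynomial.X 2) *
      garG1 (MvPolynomial.C κ0) (MvPolynomial.C κ1) (MvPolynomial.C θ1) (MvPolynomial.C θ2)
        (MvPolynomial.C t) (MvPolynomial.C s) (MvPolynomial.C c) (MvPolynomial.C k)
        (MvPolynomial.X 0) (MvPolynomial.X 1) (MvPolynomial.X 2) +
    (MvPolynomial.X 0 - MvPolynomial.C t *
        (MvPolynomial.X 0 * MvPolynomial.X 2 - 1)) *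
      garG2 (MvPolynomial.C κ0) (MvPolynomial.C κ1) (MvPolynomial.C θ1) (MvPolynomial.C θ2)
        (MvPolynomial.C t) (MvPolynomial.C s) (MvPolynomial.C c) (MvPolynomial.C k)
        (MvPolynomial.X 0) (MvPolynomial.X 1) (MvPolynomial.X 2) (MvPolynomial.X 3))) =
      1 / (t * (t - 1) * (t - s)) * (-(1 - t * z) * garG1 κ0 κ1 θ1 θ2 t s c k x y z +
        (x - t * (x * z - 1)) * garG2 κ0 κ1 θ1 θ2 t s c k x y z w) := by
    intro x y z w
    simp [garG1, garG2]
  rw [hev]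
  clear hev
  have hz : (1 / q2) ≠ 0 := one_div_ne_zero h2
  have hu : q1 * q2 ≠ 0 := mul_ne_zero h1 h2
  have hx : (q1 * q2 + 1) * q2 = (1 + q1 * q2) / (1 / q2) := by field_simp; ring
  have e1 := garnierB_mul κ0 κ1 κinf θ1 θ2 t s (q2 + 1 / q1) (q1 * (c - p1 * q1)) h6
    (sub_ne_zero.mpr h7) (sub_ne_zero.mpr h8) (sub_ne_zero.mpr h9)
  have e2 := garnierB_mul κ0 κ1 κinf θ1 θ2 t s q2 (p2 - q1 * (c - p1 * q1)) h2
    (sub_ne_zero.mpr h3) (sub_ne_zero.mpr h4) (sub_ne_zero.mpr h5)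
  rw [← hk', garG1_spec κ0 κ1 θ1 θ2 t s c k (q1 * q2) (p1 / q2 ^ 2) (1 / q2) hz hu hk _ _
    (by field_simp; try ring) (by field_simp; try ring), ← hx] at e1
  rw [← hk', garG2_spec κ0 κ1 θ1 θ2 t s c k ((q1 * q2 + 1) * q2) (p1 / q2 ^ 2) (1 / q2)
    (-(q2 * p2 - 2 * (q1 * q2 + 1 / 2) * p1 / q2) * q2) hz hk _ _
    (by field_simp) (by field_simp; ring)] at e2
  simp only [garnierH1', psi, garnierH1]
  generalize garG1 κ0 κ1 θ1 θ2 t s c k _ _ _ = G1 at *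
  generalize garG2 κ0 κ1 θ1 θ2 t s c k _ _ _ _ = G2 at *
  generalize garnierB κ0 κ1 κinf θ1 θ2 t s _ _ = B1 at *
  generalize garnierB κ0 κ1 κinf θ1 θ2 t s _ _ = B2 at *
  have d1 : q2 + 1 / q1 - q2 = 1 / q1 := by ring
  have d2 : q2 - (q2 + 1 / q1) = -(1 / q1) := by ring
  rw [d1, d2]
  trans (1 / (t * (t - 1) * (t - s))) * (-(q1 * (q2 - t)) * ((q2 + 1 / q1) * (q2 + 1 / q1 - 1) *
    (q2 + 1 / q1 - t) * (q2 + 1 / q1 - s) * B1) + q1 * (q2 + 1 / q1 - t) *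
    (q2 * (q2 - 1) * (q2 - t) * (q2 - s) * B2))
  · generalize hQ : q2 + 1 / q1 = Q
    field_simp
    ring
  · rw [e1, e2]
    field_simp
    ring
end

section
/- Holomorphy in the chart r3: fix t, s ∈ ℂ with t, s ∉ {0,1} and t ≠ s; then there exists a polynomial P in four variables with complex coefficients such that for all complex (q1,p1,q2,p2) with q1 ≠ 0, p1 ≠ 0, q2 ∉ {0,1,t,s} and q2 + 1/q1 ∉ {0,1,t,s}, one has H1(ψ(q1,p1,q2,p2), t, s) = P(−(q1·p1 + κ∞)·p1, 1/p1, q2, p2). That is, the polynomial Hamiltonian obtained from H1 by φ1 becomes again polynomial in the coordinates (x3,y3,z3,w3) = (−(q1p1+κ∞)p1, 1/p1, q2, p2). -/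
/-- `F(q) B(q,p)` with denominators cleared, `F = q(q-1)(q-t)(q-s)`. -/
lemma garnierB_clear (κ0 κ1 κinf θ1 θ2 t s q p : ℂ) (h0 : q ≠ 0) (h1 : q ≠ 1) (ht : q ≠ t)
    (hs : q ≠ s) :
    q * (q - 1) * (q - t) * (q - s) * garnierB κ0 κ1 κinf θ1 θ2 t s q p =
      q * (q - 1) * (q - t) * (q - s) * p ^ 2 +
        (((κ0 + κ1 + θ1 + θ2 - 1) ^ 2 - κinf ^ 2) / 4) * ((q - t) * (q - s)) -
        ((θ1 - 1) * (q * (q - 1) * (q - s)) + θ2 * (q * (q - 1) * (q - t)) +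
          κ0 * ((q - 1) * (q - t) * (q - s)) + κ1 * (q * (q - t) * (q - s))) * p := by
  have h1' := sub_ne_zero.mpr h1
  have ht' := sub_ne_zero.mpr ht
  have hs' := sub_ne_zero.mpr hs
  unfold garnierB
  field_simp

/-- The transformed Hamiltonian (times `t(t-1)(t-s)`), as a polynomial in
`Q = q1`, `n = c - q1 p1`, `z = q2`, `w = p2`, `x = x3`, over any commutative ring. -/
def chartPoly {R : Type*} [CommRing R] (t s k g g2 g1 g0 Q n z w x : R) : R :=
  -(z - t) * ((z - t) * (3 * z ^ 2 - 2 * (1 + s) * z + s) * Q ^ 2 * n ^ 2 +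
      ((z - t) * (3 * z - (1 + s)) + (3 * z ^ 2 - 2 * (1 + s) * z + s)) * Q * n ^ 2 +
      (z - t + (3 * z - (1 + s))) * n ^ 2) -
    k * (z - t) ^ 2 +
    (Q * (z - t) + 1) * (z * (z - 1) * (z - t) * (z - s)) * (w ^ 2 - 2 * w * Q * n) +
    2 * (z - t) * (g * z ^ 3 + g2 * z ^ 2 + g1 * z + g0) * Q ^ 2 * n +
    ((z - t) * (3 * g * z ^ 2 + 2 * g2 * z + g1) + (g * z ^ 3 + g2 * z ^ 2 + g1 * z + g0)) *
      Q * n +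
    (z - t) * (3 * g * z + g2) * n -
    (Q * (z - t) + 1) * (g * z ^ 3 + g2 * z ^ 2 + g1 * z + g0) * w +
    (z - t) * x

lemma map_chartPoly {R S : Type*} [CommRing R] [CommRing S] (f : R →+* S)
    (t s k g g2 g1 g0 Q n z w x : R) :
    f (chartPoly t s k g g2 g1 g0 Q n z w x) =
      chartPoly (f t) (f s) (f k) (f g) (f g2) (f g1) (f g0) (f Q) (f n) (f z) (f w) (f x) := by
  have h2 : f 2 = 2 := map_ofNat f 2
  have h3 : f 3 = 3 := map_ofNat f 3
  simp [chartPoly, h2, h3]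

/-- Holomorphy in the chart `r3`: the polynomial Hamiltonian obtained from `H1`
by φ1 becomes again polynomial in the coordinates
`(x3,y3,z3,w3) = (-(q1·p1 + κ∞)·p1, 1/p1, q2, p2)`. -/
theorem garnierH1_chart_r3 (κ0 κ1 κinf θ1 θ2 t s : ℂ)
    (ht0 : t ≠ 0) (ht1 : t ≠ 1) (hs0 : s ≠ 0) (hs1 : s ≠ 1) (hts : t ≠ s) :
    ∃ P : MvPolynomial (Fin 4) ℂ, ∀ q1 p1 q2 p2 : ℂ,
      q1 ≠ 0 → p1 ≠ 0 → q2 ≠ 0 → q2 ≠ 1 → q2 ≠ t → q2 ≠ s →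
      q2 + 1 / q1 ≠ 0 → q2 + 1 / q1 ≠ 1 → q2 + 1 / q1 ≠ t → q2 + 1 / q1 ≠ s →
      garnierH1' κ0 κ1 κinf θ1 θ2
          (psi ((κ0 + κ1 - κinf + θ1 + θ2 - 1) / 2) (q1, p1, q2, p2)) t s =
        MvPolynomial.eval ![-(q1 * p1 + κinf) * p1, 1 / p1, q2, p2] P := by
  obtain ⟨g, hg⟩ : ∃ g, g = κ0 + κ1 + θ1 + θ2 - 1 := ⟨_, rfl⟩
  obtain ⟨g2, hg2⟩ : ∃ g2, g2 = -((θ1 - 1) * (1 + s) + θ2 * (1 + t) + κ0 * (1 + t + s) +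
    κ1 * (t + s)) := ⟨_, rfl⟩
  obtain ⟨g1, hg1⟩ : ∃ g1, g1 = (θ1 - 1) * s + θ2 * t + κ0 * (t + s + t * s) +
    κ1 * (t * s) := ⟨_, rfl⟩
  obtain ⟨g0, hg0⟩ : ∃ g0, g0 = -(κ0 * (t * s)) := ⟨_, rfl⟩
  have hG : ∀ q : ℂ, ((θ1 - 1) * (q * (q - 1) * (q - s)) + θ2 * (q * (q - 1) * (q - t)) +
          κ0 * ((q - 1) * (q - t) * (q - s)) + κ1 * (q * (q - t) * (q - s))) =
      g * q ^ 3 + g2 * q ^ 2 + g1 * q + g0 := by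
    intro q; rw [hg, hg2, hg1, hg0]; ring
  have hD : t * (t - 1) * (t - s) ≠ 0 :=
    mul_ne_zero (mul_ne_zero ht0 (sub_ne_zero.mpr ht1)) (sub_ne_zero.mpr hts)
  refine ⟨MvPolynomial.C (t * (t - 1) * (t - s))⁻¹ *
    chartPoly (MvPolynomial.C t) (MvPolynomial.C s) (MvPolynomial.C ((g ^ 2 - κinf ^ 2) / 4))
      (MvPolynomial.C g) (MvPolynomial.C g2) (MvPolynomial.C g1) (MvPolynomial.C g0)
      (-(MvPolynomial.X 0 * MvPolynomial.X 1 + MvPolynomial.C κinf) * MvPolynomial.X 1)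
      (MvPolynomial.C ((g - κinf) / 2) +
        (MvPolynomial.X 0 * MvPolynomial.X 1 + MvPolynomial.C κinf))
      (MvPolynomial.X 2) (MvPolynomial.X 3) (MvPolynomial.X 0), ?_⟩
  intro q1 p1 q2 p2 hq1 hp1 h0 h1 ht hs k0 k1 kt ks
  have e1 : -((-(q1 * p1 + κinf) * p1) * (1 / p1) + κinf) * (1 / p1) = q1 := by
    field_simp; ring
  have e2 : (g - κinf) / 2 + ((-(q1 * p1 + κinf) * p1) * (1 / p1) + κinf) =
      (g - κinf) / 2 - q1 * p1 := by
    field_simp; ring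
  have hR : MvPolynomial.eval ![-(q1 * p1 + κinf) * p1, 1 / p1, q2, p2]
      (MvPolynomial.C (t * (t - 1) * (t - s))⁻¹ *
    chartPoly (MvPolynomial.C t) (MvPolynomial.C s) (MvPolynomial.C ((g ^ 2 - κinf ^ 2) / 4))
      (MvPolynomial.C g) (MvPolynomial.C g2) (MvPolynomial.C g1) (MvPolynomial.C g0)
      (-(MvPolynomial.X 0 * MvPolynomial.X 1 + MvPolynomial.C κinf) * MvPolynomial.X 1)
      (MvPolynomial.C ((g - κinf) / 2) +
        (MvPolynomial.X 0 * MvPolynomial.X 1 + MvPolynomial.C κinf))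
      (MvPolynomial.X 2) (MvPolynomial.X 3) (MvPolynomial.X 0)) =
      (t * (t - 1) * (t - s))⁻¹ * chartPoly t s ((g ^ 2 - κinf ^ 2) / 4) g g2 g1 g0 q1
        ((g - κinf) / 2 - q1 * p1) q2 p2 (-(q1 * p1 + κinf) * p1) := by
    rw [map_mul, map_chartPoly]
    simp only [map_mul, map_add, map_neg, MvPolynomial.eval_C, MvPolynomial.eval_X]
    simp only [Matrix.cons_val]
    rw [e1, e2]
  rw [hR]
  have hc : (κ0 + κ1 - κinf + θ1 + θ2 - 1) / 2 = (g - κinf) / 2 := by rw [hg]; ring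
  simp only [garnierH1', psi, garnierH1]
  rw [hc]
  obtain ⟨u, hu⟩ : ∃ u, u = 1 / q1 := ⟨_, rfl⟩
  have hqu : q1 * u = 1 := by rw [hu]; field_simp
  rw [← hu] at k0 k1 kt ks ⊢
  obtain ⟨n, hn⟩ : ∃ n, n = (g - κinf) / 2 - p1 * q1 := ⟨_, rfl⟩
  have hn' : (g - κinf) / 2 - q1 * p1 = n := by rw [hn]; ring
  rw [hn', ← hn]
  have b1 := garnierB_clear κ0 κ1 κinf θ1 θ2 t s (q2 + u) (q1 * n) k0 k1 kt ks
  have b2 := garnierB_clear κ0 κ1 κinf θ1 θ2 t s q2 (p2 - q1 * n) h0 h1 ht hs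
  rw [hG, ← hg] at b1 b2
  generalize garnierB κ0 κ1 κinf θ1 θ2 t s (q2 + u) (q1 * n) = B1 at b1 ⊢
  generalize garnierB κ0 κ1 κinf θ1 θ2 t s q2 (p2 - q1 * n) = B2 at b2 ⊢
  have hu0 : u ≠ 0 := by rw [hu]; exact one_div_ne_zero hq1
  have hinv : u⁻¹ = q1 := by rw [hu]; simp
  have hx : -(q1 * p1 + κinf) * p1 = u * (-n ^ 2 - (g ^ 2 - κinf ^ 2) / 4 + g * n) := by
    rw [hn]
    linear_combination (-(q1 * p1 + κinf) * p1) * (-hqu)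
  have d1 : q2 + u - q2 = u := by ring
  have d2 : q2 - (q2 + u) = -u := by ring
  rw [hx, d1, d2]
  have hL : -((q2 + u) * (q2 + u - 1) * (q2 + u - t) * (q2 + u - s) * (q2 - t)) /
      (u * t * (t - 1) * (t - s)) * B1 -
      q2 * (q2 - 1) * (q2 - t) * (q2 - s) * (q2 + u - t) /
      (-u * t * (t - 1) * (t - s)) * B2 =
      (t * (t - 1) * (t - s))⁻¹ * (q1 *
        (-((q2 - t) * ((q2 + u) * (q2 + u - 1) * (q2 + u - t) * (q2 + u - s) * B1)) +
          (q2 + u - t) * (q2 * (q2 - 1) * (q2 - t) * (q2 - s) * B2))) := by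
    have ht1' := sub_ne_zero.mpr ht1
    have hts' := sub_ne_zero.mpr hts
    rw [← hinv]
    field_simp
    ring
  rw [hL, b1, b2]
  congr 1
  have hq : q1 = 1 / u := by rw [← hinv]; simp
  unfold chartPoly
  generalize (g ^ 2 - κinf ^ 2) / 4 = k
  clear hn hn' hx hinv hqu hL hR e1 e2
  subst hq
  field_simp
  ring
end
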